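/- arXiv:1704.00749 — 2 statements merged into one kernel-verified Lean document; each statement's English description precedes it below -/
import Mathlib

section
/- Assume the primal problem is feasible. Let ε > 0 and choose step sizes α, β > 0 with α < 2/L and β < min{ ε/(2 N^{3/2} L), √( α(1 − Lα/2) ε² / (2 N L) ) }. Then there exists T ∈ ℕ with T ≤ ⌈ (D* − D(z(0))) / δ(α,β) ⌉, where δ(α,β) = min{ (α − (L/2)α²)·ε²/2 − N L β², (ε β L N)/(2 N^{3/2} L) − β² L N }, such that the VC-LB iterates satisfy fes(q(z(T))) ≤ V(z(T)) ≤ ε. -/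
open Matrix

noncomputable section

/-- Euclidean norm of a vector in ℝ^{4N}, represented as four blocks of ℝ^N. -/
def enorm4 {N : ℕ} (w : Fin 4 → Fin N → ℝ) : ℝ :=
  Real.sqrt (∑ b, ∑ i, w b i ^ 2)

/-- sign(x) = 1 if x ≥ 0 and −1 if x < 0. -/
def sgn (x : ℝ) : ℝ := if 0 ≤ x then 1 else -1

/-- The (linearized) voltage map v(q) = A q + d. -/
def volt {N : ℕ} (A : Matrix (Fin N) (Fin N) ℝ) (d : Fin N → ℝ) (q : Fin N → ℝ) :
    Fin N → ℝ :=
  A *ᵥ q + d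

/-- q(z) = λ^min − λ^max + A⁻¹(μ^min − μ^max). -/
def qOf {N : ℕ} (A : Matrix (Fin N) (Fin N) ℝ) (z : Fin 4 → Fin N → ℝ) : Fin N → ℝ :=
  z 0 - z 1 + A⁻¹ *ᵥ (z 2 - z 3)

/-- ∇D(z) = (v^min − v(q(z)), v(q(z)) − v^max, q^min − q(z), q(z) − q^max). -/
def gradD {N : ℕ} (A : Matrix (Fin N) (Fin N) ℝ) (d vmin vmax qmin qmax : Fin N → ℝ)
    (z : Fin 4 → Fin N → ℝ) : Fin 4 → Fin N → ℝ :=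
  ![vmin - volt A d (qOf A z), volt A d (qOf A z) - vmax,
    qmin - qOf A z, qOf A z - qmax]

/-- V(z) = ‖z − ⌈z + ∇D(z)⌉₊‖. -/
def Vfun {N : ℕ} (A : Matrix (Fin N) (Fin N) ℝ) (d vmin vmax qmin qmax : Fin N → ℝ)
    (z : Fin 4 → Fin N → ℝ) : ℝ :=
  enorm4 (fun b i => z b i - max (z b i + gradD A d vmin vmax qmin qmax z b i) 0)

/-- The Lagrangian dual function
D(z) = inf_q [ (1/2) qᵀAq + (λ^min)ᵀ(v^min − v(q)) + (λ^max)ᵀ(v(q) − v^max)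
  + (μ^min)ᵀ(q^min − q) + (μ^max)ᵀ(q − q^max) ]. -/
def dualFun {N : ℕ} (A : Matrix (Fin N) (Fin N) ℝ) (d vmin vmax qmin qmax : Fin N → ℝ)
    (z : Fin 4 → Fin N → ℝ) : ℝ :=
  ⨅ q : Fin N → ℝ,
    ((1 / 2) * (q ⬝ᵥ A *ᵥ q) + (z 0) ⬝ᵥ (vmin - volt A d q)
      + (z 1) ⬝ᵥ (volt A d q - vmax) + (z 2) ⬝ᵥ (qmin - q) + (z 3) ⬝ᵥ (q - qmax))

/-- fes(q) = Euclidean distance from (q, v(q)) to the box [q^min,q^max] × [v^min,v^max]. -/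
def fes {N : ℕ} (A : Matrix (Fin N) (Fin N) ℝ) (d vmin vmax qmin qmax : Fin N → ℝ)
    (q : Fin N → ℝ) : ℝ :=
  sInf { r : ℝ | ∃ y1 y2 : Fin N → ℝ,
    (∀ i, qmin i ≤ y1 i ∧ y1 i ≤ qmax i) ∧ (∀ i, vmin i ≤ y2 i ∧ y2 i ≤ vmax i) ∧
    r = Real.sqrt ((∑ i, (q i - y1 i) ^ 2) + ∑ i, (volt A d q i - y2 i) ^ 2) }

/-- Parseval's identity for the orthonormal eigenbasis of a Hermitian matrix. -/
lemma sum_eigenvector_dotProduct_mul {N : ℕ} {A : Matrix (Fin N) (Fin N) ℝ}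
    (hA : A.IsHermitian) (x y : Fin N → ℝ) :
    ∑ i, ((hA.eigenvectorBasis i).ofLp ⬝ᵥ x) * ((hA.eigenvectorBasis i).ofLp ⬝ᵥ y) = x ⬝ᵥ y := by
  have h := hA.eigenvectorBasis.sum_inner_mul_inner (WithLp.toLp 2 x) (WithLp.toLp 2 y)
  simp only [EuclideanSpace.inner_eq_star_dotProduct, star_trivial] at h
  rw [dotProduct_comm x y, ← h]
  exact Finset.sum_congr rfl fun i _ => by
    rw [dotProduct_comm _ y]

lemma dotProduct_mulVec_symm {N : ℕ} {A : Matrix (Fin N) (Fin N) ℝ}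
    (hA : A.IsHermitian) (x y : Fin N → ℝ) : x ⬝ᵥ A *ᵥ y = y ⬝ᵥ A *ᵥ x := by
  rw [dotProduct_mulVec, dotProduct_comm, ← mulVec_transpose]
  congr 2

lemma eigenvector_dotProduct_mulVec {N : ℕ} {A : Matrix (Fin N) (Fin N) ℝ}
    (hA : A.IsHermitian) (x : Fin N → ℝ) (i : Fin N) :
    (hA.eigenvectorBasis i).ofLp ⬝ᵥ A *ᵥ x =
      hA.eigenvalues i * ((hA.eigenvectorBasis i).ofLp ⬝ᵥ x) := by
  rw [dotProduct_mulVec_symm hA, hA.mulVec_eigenvectorBasis, dotProduct_smul, dotProduct_comm,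
    smul_eq_mul]

lemma mulVec_qOf {N : ℕ} {A : Matrix (Fin N) (Fin N) ℝ} (hA : A.PosDef)
    (z : Fin 4 → Fin N → ℝ) : A *ᵥ qOf A z = A *ᵥ (z 0 - z 1) + (z 2 - z 3) := by
  rw [qOf, mulVec_add, mulVec_mulVec, Matrix.mul_nonsing_inv _ (A.isUnit_iff_isUnit_det.1 hA.isUnit),
    one_mulVec]

lemma dotProduct_mulVec_qOf {N : ℕ} {A : Matrix (Fin N) (Fin N) ℝ} (hA : A.PosDef)
    (q : Fin N → ℝ) (z : Fin 4 → Fin N → ℝ) :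
    q ⬝ᵥ A *ᵥ qOf A z = z 0 ⬝ᵥ A *ᵥ q - z 1 ⬝ᵥ A *ᵥ q + z 2 ⬝ᵥ q - z 3 ⬝ᵥ q := by
  rw [mulVec_qOf hA, dotProduct_add, dotProduct_mulVec_symm hA.1, sub_dotProduct,
    dotProduct_sub, dotProduct_comm q, dotProduct_comm q]
  ring

/-- The negated Hessian of the dual function is bounded by `L`. -/
lemma qOf_quadratic_le {N : ℕ} {A : Matrix (Fin N) (Fin N) ℝ} (hA : A.PosDef) {L : ℝ}
    (hL : ∀ i, 2 * (hA.1.eigenvalues i + (hA.1.eigenvalues i)⁻¹) ≤ L)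
    (w : Fin 4 → Fin N → ℝ) :
    qOf A w ⬝ᵥ A *ᵥ qOf A w ≤ L * ∑ b, ∑ i, w b i ^ 2 := by
  set p := qOf A w
  set x := w 0 - w 1 with hx
  set y := w 2 - w 3 with hy
  have hAp : A *ᵥ p = A *ᵥ x + y := mulVec_qOf hA w
  have hmode : ∀ i, ((hA.1.eigenvectorBasis i).ofLp ⬝ᵥ p) *
      ((hA.1.eigenvectorBasis i).ofLp ⬝ᵥ A *ᵥ p) ≤
      L / 2 * (((hA.1.eigenvectorBasis i).ofLp ⬝ᵥ x) * ((hA.1.eigenvectorBasis i).ofLp ⬝ᵥ x) +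
        ((hA.1.eigenvectorBasis i).ofLp ⬝ᵥ y) * ((hA.1.eigenvectorBasis i).ofLp ⬝ᵥ y)) := by
    intro i
    have hpos := hA.eigenvalues_pos i
    have h1 := eigenvector_dotProduct_mulVec hA.1 p i
    have h2 := h1
    rw [hAp, dotProduct_add, eigenvector_dotProduct_mulVec hA.1 x i] at h2
    rw [h1]
    have hLi := hL i
    set l := hA.1.eigenvalues i
    set a := (hA.1.eigenvectorBasis i).ofLp ⬝ᵥ p
    set b := (hA.1.eigenvectorBasis i).ofLp ⬝ᵥ x
    set c := (hA.1.eigenvectorBasis i).ofLp ⬝ᵥ y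
    have ha : a = b + l⁻¹ * c := by
      field_simp
      linarith
    have key : a * (l * a) ≤ (l + l⁻¹) * (b * b + c * c) := by
      have : (l + l⁻¹) * (b * b + c * c) - a * (l * a) = l⁻¹ * (b - l * c) ^ 2 := by
        rw [ha]; field_simp; ring
      have : 0 ≤ l⁻¹ * (b - l * c) ^ 2 := by positivity
      linarith
    refine key.trans (mul_le_mul_of_nonneg_right (by linarith) ?_)
    nlinarith [mul_self_nonneg b, mul_self_nonneg c]
  have hsum := Finset.sum_le_sum fun i (_ : i ∈ Finset.univ) => hmode i
  rw [sum_eigenvector_dotProduct_mul, ← Finset.mul_sum, Finset.sum_add_distrib,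
    sum_eigenvector_dotProduct_mul, sum_eigenvector_dotProduct_mul] at hsum
  refine hsum.trans ?_
  rcases isEmpty_or_nonempty (Fin N) with h | ⟨⟨i⟩⟩
  · simp [dotProduct]
  have hL0 : 0 ≤ L := by
    have := hA.eigenvalues_pos i
    exact le_trans (by positivity) (hL i)
  have hxy : x ⬝ᵥ x + y ⬝ᵥ y ≤ 2 * ∑ b, ∑ i, w b i ^ 2 := by
    simp only [dotProduct, Fin.sum_univ_four, ← Finset.sum_add_distrib, Finset.mul_sum, hx, hy,
      Pi.sub_apply]
    refine Finset.sum_le_sum fun i _ => ?_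
    nlinarith [sq_nonneg (w 0 i + w 1 i), sq_nonneg (w 2 i + w 3 i)]
  nlinarith

/-- The dual function in closed form. -/
lemma dualFun_eq {N : ℕ} {A : Matrix (Fin N) (Fin N) ℝ} (hA : A.PosDef)
    (d vmin vmax qmin qmax : Fin N → ℝ) (z : Fin 4 → Fin N → ℝ) :
    dualFun A d vmin vmax qmin qmax z = -(1 / 2) * (qOf A z ⬝ᵥ A *ᵥ qOf A z) +
      (z 0 ⬝ᵥ (vmin - d) + z 1 ⬝ᵥ (d - vmax) + z 2 ⬝ᵥ qmin - z 3 ⬝ᵥ qmax) := by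
  set C := -(1 / 2) * (qOf A z ⬝ᵥ A *ᵥ qOf A z) +
      (z 0 ⬝ᵥ (vmin - d) + z 1 ⬝ᵥ (d - vmax) + z 2 ⬝ᵥ qmin - z 3 ⬝ᵥ qmax) with hC
  have hlag : ∀ q : Fin N → ℝ, ((1 / 2) * (q ⬝ᵥ A *ᵥ q) + (z 0) ⬝ᵥ (vmin - volt A d q)
      + (z 1) ⬝ᵥ (volt A d q - vmax) + (z 2) ⬝ᵥ (qmin - q) + (z 3) ⬝ᵥ (q - qmax)) =
      C + 1 / 2 * ((q - qOf A z) ⬝ᵥ A *ᵥ (q - qOf A z)) := by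
    intro q
    have h1 := dotProduct_mulVec_qOf hA q z
    have h2 := dotProduct_mulVec_symm hA.1 (qOf A z) q
    simp only [volt, mulVec_sub, dotProduct_sub, sub_dotProduct, dotProduct_add, hC, h2]
    rw [h1]
    ring
  have hnn : ∀ q : Fin N → ℝ, 0 ≤ q ⬝ᵥ A *ᵥ q := fun q => by
    simpa using hA.posSemidef.dotProduct_mulVec_nonneg q
  simp only [dualFun, hlag]
  refine le_antisymm ?_ (le_ciInf fun q => by linarith [hnn (q - qOf A z)])
  refine (ciInf_le ⟨C, ?_⟩ (qOf A z)).trans (by simp)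
  rintro _ ⟨q, rfl⟩
  dsimp only
  linarith [hnn (q - qOf A z)]

/-- Weak duality: feasibility of the primal problem bounds the dual values. -/
lemma dualFun_le_of_feasible {N : ℕ} {A : Matrix (Fin N) (Fin N) ℝ} (hA : A.PosDef)
    {d vmin vmax qmin qmax : Fin N → ℝ} {q : Fin N → ℝ}
    (hq : ∀ i, qmin i ≤ q i ∧ q i ≤ qmax i)
    (hv : ∀ i, vmin i ≤ volt A d q i ∧ volt A d q i ≤ vmax i)
    {z : Fin 4 → Fin N → ℝ} (hz : ∀ b i, 0 ≤ z b i) :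
    dualFun A d vmin vmax qmin qmax z ≤ 1 / 2 * (q ⬝ᵥ A *ᵥ q) := by
  have hnn : 0 ≤ (q - qOf A z) ⬝ᵥ A *ᵥ (q - qOf A z) := by
    simpa using hA.posSemidef.dotProduct_mulVec_nonneg (q - qOf A z)
  have h1 := dotProduct_mulVec_qOf hA q z
  have h2 := dotProduct_mulVec_symm hA.1 (qOf A z) q
  simp only [mulVec_sub, dotProduct_sub, sub_dotProduct] at hnn
  have nonpos : ∀ {u w : Fin N → ℝ}, (∀ i, 0 ≤ u i) → (∀ i, w i ≤ 0) → u ⬝ᵥ w ≤ 0 :=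
    fun hu hw => Finset.sum_nonpos fun i _ => mul_nonpos_of_nonneg_of_nonpos (hu i) (hw i)
  have k0 := nonpos (w := vmin - volt A d q) (hz 0) fun i => sub_nonpos.2 (hv i).1
  have k1 := nonpos (w := volt A d q - vmax) (hz 1) fun i => sub_nonpos.2 (hv i).2
  have k2 := nonpos (w := qmin - q) (hz 2) fun i => sub_nonpos.2 (hq i).1
  have k3 := nonpos (w := q - qmax) (hz 3) fun i => sub_nonpos.2 (hq i).2
  simp only [volt, dotProduct_sub, dotProduct_add] at k0 k1 k2 k3
  rw [dualFun_eq hA]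
  simp only [dotProduct_sub]
  linarith

/-- Exact second-order expansion of the dual function. -/
lemma dualFun_add {N : ℕ} {A : Matrix (Fin N) (Fin N) ℝ} (hA : A.PosDef)
    (d vmin vmax qmin qmax : Fin N → ℝ) (z w : Fin 4 → Fin N → ℝ) :
    dualFun A d vmin vmax qmin qmax (z + w) = dualFun A d vmin vmax qmin qmax z +
      ∑ b, ∑ i, gradD A d vmin vmax qmin qmax z b i * w b i -
      1 / 2 * (qOf A w ⬝ᵥ A *ᵥ qOf A w) := by
  have hadd : qOf A (z + w) = qOf A z + qOf A w := by
    simp only [qOf, Pi.add_apply, mulVec_sub, mulVec_add]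
    abel
  have h1 := dotProduct_mulVec_qOf hA (qOf A z) w
  have h2 := dotProduct_mulVec_symm hA.1 (qOf A w) (qOf A z)
  have hgrad : ∑ b, ∑ i, gradD A d vmin vmax qmin qmax z b i * w b i =
      w 0 ⬝ᵥ (vmin - volt A d (qOf A z)) + w 1 ⬝ᵥ (volt A d (qOf A z) - vmax) +
        w 2 ⬝ᵥ (qmin - qOf A z) + w 3 ⬝ᵥ (qOf A z - qmax) := by
    simp only [Fin.sum_univ_four, gradD, dotProduct, mul_comm (w _ _)]
    rfl
  rw [dualFun_eq hA, dualFun_eq hA, hgrad, hadd]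
  simp only [volt, mulVec_add, dotProduct_add, add_dotProduct, dotProduct_sub, Pi.add_apply, h2]
  rw [h1]
  ring

/-- The distance to feasibility is at most the optimality residual. -/
lemma fes_le_Vfun {N : ℕ} (A : Matrix (Fin N) (Fin N) ℝ) {d vmin vmax qmin qmax : Fin N → ℝ}
    (hv : ∀ i, vmin i ≤ vmax i) (hq : ∀ i, qmin i ≤ qmax i)
    {z : Fin 4 → Fin N → ℝ} (hz : ∀ b i, 0 ≤ z b i) :
    fes A d vmin vmax qmin qmax (qOf A z) ≤ Vfun A d vmin vmax qmin qmax z := by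
  have hbox : ∀ {l u x a b : ℝ}, l ≤ u → 0 ≤ a → 0 ≤ b →
      (x - max l (min x u)) ^ 2 ≤
        (a - max (a + (l - x)) 0) ^ 2 + (b - max (b + (x - u)) 0) ^ 2 := by
    intro l u x a b hlu ha hb
    have ha2 := sq_nonneg (a - max (a + (l - x)) 0)
    have hb2 := sq_nonneg (b - max (b + (x - u)) 0)
    rcases le_total x l with h | h
    · rw [min_eq_left (h.trans hlu), max_eq_left h]
      rw [max_eq_left (by linarith : 0 ≤ a + (l - x))] at ha2 ⊢
      nlinarith
    · rcases le_total x u with h' | h'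
      · rw [min_eq_left h', max_eq_right h]
        nlinarith
      · rw [min_eq_right h', max_eq_right hlu]
        rw [max_eq_left (by linarith : 0 ≤ b + (x - u))] at hb2 ⊢
        nlinarith
  unfold fes
  refine csInf_le_of_le ⟨0, ?_⟩ ⟨fun i => max (qmin i) (min (qOf A z i) (qmax i)),
    fun i => max (vmin i) (min (volt A d (qOf A z) i) (vmax i)), fun i =>
      ⟨le_max_left _ _, max_le (hq i) (min_le_right _ _)⟩, fun i =>
      ⟨le_max_left _ _, max_le (hv i) (min_le_right _ _)⟩, rfl⟩ ?_
  · rintro _ ⟨y1, y2, -, -, rfl⟩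
    exact Real.sqrt_nonneg _
  · refine Real.sqrt_le_sqrt ?_
    simp only [Fin.sum_univ_four, ← Finset.sum_add_distrib]
    refine Finset.sum_le_sum fun i _ => ?_
    have h1 := hbox (x := volt A d (qOf A z) i) (hv i) (hz 0 i) (hz 1 i)
    have h2 := hbox (x := qOf A z i) (hq i) (hz 2 i) (hz 3 i)
    simp only [gradD, Matrix.cons_val, Pi.sub_apply]
    linarith

/-- A projected step of length `α` satisfies `‖step‖² ≤ α ⟨∇, step⟩`. -/
lemma sq_projStep_le {α g z : ℝ} (hz : 0 ≤ z) :
    (max (z + α * g) 0 - z) ^ 2 ≤ α * (g * (max (z + α * g) 0 - z)) := by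
  rcases le_total 0 (z + α * g) with h | h
  · rw [max_eq_left h]
    nlinarith
  · rw [max_eq_right h]
    nlinarith

/-- Shrinking the step size shrinks a projected step at most proportionally. -/
lemma sq_mul_residual_le {α g z : ℝ} (hα : 0 < α) (hα1 : α ≤ 1) (hz : 0 ≤ z) :
    α ^ 2 * (z - max (z + g) 0) ^ 2 ≤ (max (z + α * g) 0 - z) ^ 2 := by
  rw [← mul_pow]
  refine sq_le_sq.2 ?_
  rcases le_total 0 g with hg | hg
  · rw [max_eq_left (by positivity), max_eq_left (by positivity)]
    rw [show α * (z - (z + g)) = -(α * g) by ring, abs_neg, add_sub_cancel_left]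
  · have h1 : 0 ≤ z - max (z + g) 0 := sub_nonneg.2 (max_le (by linarith) hz)
    have h2 : max (z + α * g) 0 ≤ z := max_le (by nlinarith) hz
    rw [abs_of_nonneg (mul_nonneg hα.le h1), abs_sub_comm, abs_of_nonneg (sub_nonneg.2 h2)]
    have h3 : z - max (z + g) 0 ≤ z := by linarith [le_max_right (z + g) 0]
    have h4 : z - max (z + g) 0 ≤ -g := by linarith [le_max_left (z + g) 0]
    have : max (z + α * g) 0 ≤ z - α * (z - max (z + g) 0) :=
      max_le (by nlinarith) (by nlinarith)
    linarith

lemma sq_signStep_le {β g z : ℝ} (hβ : 0 < β) (hz : 0 ≤ z) :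
    (max (z + β * sgn g) 0 - z) ^ 2 ≤ β ^ 2 := by
  refine sq_le_sq' ?_ ?_ <;> unfold sgn <;> split_ifs
  · linarith [le_max_left (z + β * 1) 0]
  · linarith [le_max_left (z + β * -1) 0]
  · linarith [max_le (by linarith : z + β * 1 ≤ z + β) (by linarith : 0 ≤ z + β)]
  · linarith [max_le (by linarith : z + β * -1 ≤ z + β) (by linarith : 0 ≤ z + β)]

lemma signStep_nonneg {β g z : ℝ} (hβ : 0 < β) (hz : 0 ≤ z) :
    0 ≤ g * (max (z + β * sgn g) 0 - z) := by
  unfold sgn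
  split_ifs with h
  · exact mul_nonneg h (by linarith [le_max_left (z + β * 1) 0])
  · exact mul_nonneg_of_nonpos_of_nonpos (by linarith)
      (sub_nonpos.2 (max_le (by linarith) hz))

/-- A coordinate whose residual exceeds `r ≥ β` gains at least `β * r` under a sign step. -/
lemma mul_le_signStep {β r g z : ℝ} (hβ : 0 < β) (hβr : β ≤ r) (hz : 0 ≤ z)
    (h : r ^ 2 ≤ (z - max (z + g) 0) ^ 2) :
    β * r ≤ g * (max (z + β * sgn g) 0 - z) := by
  unfold sgn
  split_ifs with hg
  · have h' := sq_le_sq.1 h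
    rw [max_eq_left (by positivity), sub_add_cancel_left, abs_neg, abs_of_nonneg hg,
      abs_of_pos (hβ.trans_le hβr)] at h'
    rw [max_eq_left (by positivity)]
    nlinarith
  · have h' := sq_le_sq.1 h
    rw [abs_of_nonneg (sub_nonneg.2 (max_le (by linarith) hz)),
      abs_of_pos (hβ.trans_le hβr)] at h'
    have h1 := le_max_left (z + g) 0
    have h2 := le_max_right (z + g) 0
    rw [max_eq_left (by linarith)]
    nlinarith

/-- Ascent of the dual function along one iteration, as long as the residual exceeds `ε`. -/
lemma dualFun_ascent {N : ℕ} {A : Matrix (Fin N) (Fin N) ℝ} (hA : A.PosDef)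
    {d vmin vmax qmin qmax : Fin N → ℝ} {L ε α β r : ℝ}
    (hL : ∀ i, 2 * (hA.1.eigenvalues i + (hA.1.eigenvalues i)⁻¹) ≤ L)
    (hε : 0 < ε) (hα : 0 < α) (hα1 : α ≤ 1) (hαL : L * α ≤ 2) (hβ : 0 < β) (hβr : β ≤ r)
    (hr : 4 * N * r ^ 2 = ε ^ 2)
    {z z' : Fin 4 → Fin N → ℝ} (hz : ∀ b i, 0 ≤ z b i)
    (hstep : ∀ b i, z' b i =
      max (z b i + (if (b : ℕ) < 2 then α * gradD A d vmin vmax qmin qmax z b i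
        else β * sgn (gradD A d vmin vmax qmin qmax z b i))) 0)
    (hV : ε < Vfun A d vmin vmax qmin qmax z) :
    dualFun A d vmin vmax qmin qmax z +
      min ((α - (L / 2) * α ^ 2) * (ε ^ 2 / 2) - (N : ℝ) * L * β ^ 2)
        (β * r - β ^ 2 * L * (N : ℝ)) ≤ dualFun A d vmin vmax qmin qmax z' := by
  set g := gradD A d vmin vmax qmin qmax z with hg
  have hexp := dualFun_add hA d vmin vmax qmin qmax z (z' - z)
  have hquad := qOf_quadratic_le hA hL (z' - z)
  rw [add_sub_cancel] at hexp
  rw [hexp, ← hg]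
  have h0 : ∀ i, z' 0 i = max (z 0 i + α * g 0 i) 0 := fun i => by simpa using hstep 0 i
  have h1 : ∀ i, z' 1 i = max (z 1 i + α * g 1 i) 0 := fun i => by simpa using hstep 1 i
  have h2 : ∀ i, z' 2 i = max (z 2 i + β * sgn (g 2 i)) 0 := fun i => by simpa using hstep 2 i
  have h3 : ∀ i, z' 3 i = max (z 3 i + β * sgn (g 3 i)) 0 := fun i => by simpa using hstep 3 i
  simp only [Fin.sum_univ_four, Pi.sub_apply, h0, h1, h2, h3] at hquad ⊢
  have hV2 : ε ^ 2 < ∑ b, ∑ i, (z b i - max (z b i + g b i) 0) ^ 2 := by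
    rw [Vfun, enorm4, Real.lt_sqrt hε.le] at hV
    exact hV
  rw [Fin.sum_univ_four] at hV2
  have hL0 : 0 ≤ L := by
    rcases isEmpty_or_nonempty (Fin N) with h | ⟨⟨i⟩⟩
    · simp at hV2
      nlinarith
    · have := hA.eigenvalues_pos i
      exact le_trans (by positivity) (hL i)
  have hfirst : ∀ b, ∑ i, (max (z b i + α * g b i) 0 - z b i) ^ 2 ≤
      α * ∑ i, g b i * (max (z b i + α * g b i) 0 - z b i) := fun b => by
    rw [Finset.mul_sum]
    exact Finset.sum_le_sum fun i _ => sq_projStep_le (hz b i)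
  have hres : ∀ b, α ^ 2 * ∑ i, (z b i - max (z b i + g b i) 0) ^ 2 ≤
      ∑ i, (max (z b i + α * g b i) 0 - z b i) ^ 2 := fun b => by
    rw [Finset.mul_sum]
    exact Finset.sum_le_sum fun i _ => sq_mul_residual_le hα hα1 (hz b i)
  have hsign : ∀ b, ∑ i, (max (z b i + β * sgn (g b i)) 0 - z b i) ^ 2 ≤ N * β ^ 2 := fun b => by
    refine (Finset.sum_le_sum fun i _ => sq_signStep_le hβ (hz b i)).trans ?_
    simp
  have hnonneg : ∀ b, 0 ≤ ∑ i, g b i * (max (z b i + β * sgn (g b i)) 0 - z b i) := fun b =>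
    Finset.sum_nonneg fun i _ => signStep_nonneg hβ (hz b i)
  have hgain : ∀ b, N * r ^ 2 < ∑ i, (z b i - max (z b i + g b i) 0) ^ 2 →
      β * r ≤ ∑ i, g b i * (max (z b i + β * sgn (g b i)) 0 - z b i) := by
    intro b hb
    obtain ⟨i, -, hi⟩ : ∃ i ∈ Finset.univ, r ^ 2 < (z b i - max (z b i + g b i) 0) ^ 2 := by
      refine Finset.exists_lt_of_sum_lt ?_
      simpa using hb
    refine (mul_le_signStep hβ hβr (hz b i) hi.le).trans ?_
    exact Finset.single_le_sum (f := fun i => g b i * (max (z b i + β * sgn (g b i)) 0 - z b i))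
      (fun i _ => signStep_nonneg hβ (hz b i)) (Finset.mem_univ i)
  have f0 := hfirst 0
  have f1 := hfirst 1
  have r0 := hres 0
  have r1 := hres 1
  have s2 := hsign 2
  have s3 := hsign 3
  have n2 := hnonneg 2
  have n3 := hnonneg 3
  have g2 := hgain 2
  have g3 := hgain 3
  have p0 : 0 ≤ ∑ i, (max (z 0 i + α * g 0 i) 0 - z 0 i) ^ 2 := by positivity
  have p1 : 0 ≤ ∑ i, (max (z 1 i + α * g 1 i) 0 - z 1 i) ^ 2 := by positivity
  generalize (∑ i, g 0 i * (max (z 0 i + α * g 0 i) 0 - z 0 i)) = F0 at *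
  generalize (∑ i, g 1 i * (max (z 1 i + α * g 1 i) 0 - z 1 i)) = F1 at *
  generalize (∑ i, g 2 i * (max (z 2 i + β * sgn (g 2 i)) 0 - z 2 i)) = F2 at *
  generalize (∑ i, g 3 i * (max (z 3 i + β * sgn (g 3 i)) 0 - z 3 i)) = F3 at *
  generalize (∑ i, (max (z 0 i + α * g 0 i) 0 - z 0 i) ^ 2) = W0 at *
  generalize (∑ i, (max (z 1 i + α * g 1 i) 0 - z 1 i) ^ 2) = W1 at *
  generalize (∑ i, (max (z 2 i + β * sgn (g 2 i)) 0 - z 2 i) ^ 2) = W2 at *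
  generalize (∑ i, (max (z 3 i + β * sgn (g 3 i)) 0 - z 3 i) ^ 2) = W3 at *
  generalize (∑ i, (z 0 i - max (z 0 i + g 0 i) 0) ^ 2) = R0 at *
  generalize (∑ i, (z 1 i - max (z 1 i + g 1 i) 0) ^ 2) = R1 at *
  generalize (∑ i, (z 2 i - max (z 2 i + g 2 i) 0) ^ 2) = R2 at *
  generalize (∑ i, (z 3 i - max (z 3 i + g 3 i) 0) ^ 2) = R3 at *
  generalize qOf A (z' - z) ⬝ᵥ A *ᵥ qOf A (z' - z) = Q at *
  have hc : 0 ≤ 1 / α - L / 2 := by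
    rw [sub_nonneg, le_div_iff₀ hα]
    linarith
  have hF : (W0 + W1) / α ≤ F0 + F1 := by
    rw [div_le_iff₀ hα]
    linarith
  have hLW : L * (W2 + W3) ≤ L * (2 * N * β ^ 2) := mul_le_mul_of_nonneg_left (by linarith) hL0
  have hmain : (1 / α - L / 2) * (W0 + W1) + (F2 + F3) - N * L * β ^ 2 ≤
      F0 + F1 + F2 + F3 - 1 / 2 * Q := by
    have : (1 / α - L / 2) * (W0 + W1) = (W0 + W1) / α - L / 2 * (W0 + W1) := by ring
    linarith
  have hgainmin : min ((α - (L / 2) * α ^ 2) * (ε ^ 2 / 2) - (N : ℝ) * L * β ^ 2)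
      (β * r - β ^ 2 * L * (N : ℝ)) ≤
        (1 / α - L / 2) * (W0 + W1) + (F2 + F3) - N * L * β ^ 2 := by
    rcases le_or_gt (ε ^ 2 / 2) (R0 + R1) with hR | hR
    · refine (min_le_left _ _).trans ?_
      have hW : α ^ 2 * (ε ^ 2 / 2) ≤ W0 + W1 := by nlinarith [sq_nonneg α]
      have := mul_le_mul_of_nonneg_left hW hc
      have e : (1 / α - L / 2) * (α ^ 2 * (ε ^ 2 / 2)) =
          (α - (L / 2) * α ^ 2) * (ε ^ 2 / 2) := by
        field_simp
      linarith
    · refine (min_le_right _ _).trans ?_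
      have hW : 0 ≤ (1 / α - L / 2) * (W0 + W1) := mul_nonneg hc (by linarith)
      have hF23 : β * r ≤ F2 + F3 := by
        rcases lt_or_ge (N * r ^ 2) R2 with h | h
        · linarith [g2 h]
        · linarith [g3 (by linarith)]
      linarith
  linarith

/-- Proposition 3: if the primal problem is feasible and the step sizes satisfy
α < 2/L and β < min{ε/(2N^{3/2}L), √(α(1 − Lα/2)ε²/(2NL))}, then the VC-LB iterates
(z(0) = 0, λ-block projected gradient step with step α, μ-block projected sign step with
step β) reach fes(q(z(T))) ≤ V(z(T)) ≤ ε for some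
T ≤ ⌈(D* − D(z(0)))/δ(α,β)⌉. -/
theorem stmt_9 (N : ℕ) (hN : 0 < N) (A : Matrix (Fin N) (Fin N) ℝ) (hA : A.PosDef)
    (d vmin vmax qmin qmax : Fin N → ℝ)
    (hv : ∀ i, vmin i ≤ vmax i) (hq : ∀ i, qmin i ≤ qmax i)
    (hfeas : ∃ q : Fin N → ℝ, (∀ i, qmin i ≤ q i ∧ q i ≤ qmax i) ∧
      ∀ i, vmin i ≤ volt A d q i ∧ volt A d q i ≤ vmax i)
    (L : ℝ)
    (hL : IsGreatest
      (Set.range fun i : Fin N => 2 * (hA.1.eigenvalues i + (hA.1.eigenvalues i)⁻¹)) L)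
    (ε : ℝ) (hε : 0 < ε)
    (α β : ℝ) (hα0 : 0 < α) (hα : α < 2 / L) (hβ0 : 0 < β)
    (hβ : β < min (ε / (2 * (N : ℝ) ^ ((3 : ℝ) / 2) * L))
      (Real.sqrt (α * (1 - L * α / 2) * ε ^ 2 / (2 * (N : ℝ) * L))))
    (ziter : ℕ → Fin 4 → Fin N → ℝ) (hz0 : ziter 0 = 0)
    (hstep : ∀ t b i, ziter (t + 1) b i =
      max (ziter t b i + (if (b : ℕ) < 2 then α * gradD A d vmin vmax qmin qmax (ziter t) b i
        else β * sgn (gradD A d vmin vmax qmin qmax (ziter t) b i))) 0) :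
    ∃ T : ℕ,
      T ≤ ⌈(sSup (dualFun A d vmin vmax qmin qmax '' {z | ∀ b i, 0 ≤ z b i})
              - dualFun A d vmin vmax qmin qmax (ziter 0))
            / min ((α - (L / 2) * α ^ 2) * (ε ^ 2 / 2) - (N : ℝ) * L * β ^ 2)
                (ε * β * L * (N : ℝ) / (2 * (N : ℝ) ^ ((3 : ℝ) / 2) * L)
                  - β ^ 2 * L * (N : ℝ))⌉₊ ∧
      fes A d vmin vmax qmin qmax (qOf A (ziter T))
          ≤ Vfun A d vmin vmax qmin qmax (ziter T) ∧
      Vfun A d vmin vmax qmin qmax (ziter T) ≤ ε := by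
  have hLi : ∀ i, 2 * (hA.1.eigenvalues i + (hA.1.eigenvalues i)⁻¹) ≤ L := fun i => hL.2 ⟨i, rfl⟩
  have hL4 : 4 ≤ L := by
    refine le_trans ?_ (hLi ⟨0, hN⟩)
    have hpos := hA.eigenvalues_pos ⟨0, hN⟩
    set l := hA.1.eigenvalues ⟨0, hN⟩
    have : l + l⁻¹ - 2 = l⁻¹ * (l - 1) ^ 2 := by
      field_simp
      ring
    have : 0 ≤ l⁻¹ * (l - 1) ^ 2 := by positivity
    linarith
  have hL0 : 0 < L := by linarith
  have hN1 : (1 : ℝ) ≤ N := by exact_mod_cast hN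
  have hNpos : (0 : ℝ) < N := by linarith
  have hαL : α * L < 2 := (lt_div_iff₀ hL0).1 hα
  have hsqrt : Real.sqrt N * Real.sqrt N = N := Real.mul_self_sqrt hNpos.le
  have hspos : 0 < Real.sqrt N := Real.sqrt_pos.2 hNpos
  have hpow : (N : ℝ) ^ ((3 : ℝ) / 2) = N * Real.sqrt N := by
    rw [show (3 : ℝ) / 2 = 1 + 1 / 2 by norm_num, Real.rpow_add hNpos, Real.rpow_one,
      Real.sqrt_eq_rpow]
  rw [hpow] at hβ ⊢
  obtain ⟨hβ1, hβ2⟩ := lt_min_iff.1 hβ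
  set r := ε / (2 * Real.sqrt N) with hr
  have hr2 : 4 * N * r ^ 2 = ε ^ 2 := by
    rw [hr, div_pow, mul_pow, Real.sq_sqrt hNpos.le]
    field_simp
    norm_num
  have hβLN : β * (L * N) < r := by
    rw [← lt_div_iff₀ (by positivity)]
    refine hβ1.trans_eq ?_
    rw [hr]
    field_simp
  have hβr : β ≤ r := by nlinarith [mul_le_mul hL4 hN1 zero_le_one hL0.le]
  have hrate : ε * β * L * (N : ℝ) / (2 * (N * Real.sqrt N) * L) = β * r := by
    rw [hr]
    field_simp
  rw [hrate]
  set δ := min ((α - (L / 2) * α ^ 2) * (ε ^ 2 / 2) - (N : ℝ) * L * β ^ 2)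
    (β * r - β ^ 2 * L * (N : ℝ)) with hδ
  have hδ0 : 0 < δ := by
    refine lt_min ?_ ?_
    · have h := (Real.lt_sqrt hβ0.le).1 hβ2
      rw [lt_div_iff₀ (by positivity)] at h
      nlinarith
    · nlinarith
  have hnn : ∀ t b i, 0 ≤ ziter t b i := by
    rintro (_ | t) b i
    · simp [hz0]
    · rw [hstep]
      exact le_max_right _ _
  set S := dualFun A d vmin vmax qmin qmax '' {z | ∀ b i, 0 ≤ z b i} with hS
  have hle : ∀ t, dualFun A d vmin vmax qmin qmax (ziter t) ≤ sSup S := by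
    obtain ⟨q, hq', hv'⟩ := hfeas
    refine fun t => le_csSup ⟨1 / 2 * (q ⬝ᵥ A *ᵥ q), ?_⟩ ⟨_, hnn t, rfl⟩
    rintro _ ⟨z, hz, rfl⟩
    exact dualFun_le_of_feasible hA hq' hv' hz
  set M := ⌈(sSup S - dualFun A d vmin vmax qmin qmax (ziter 0)) / δ⌉₊ with hM
  obtain ⟨T, hT, hTV⟩ : ∃ T ≤ M, Vfun A d vmin vmax qmin qmax (ziter T) ≤ ε := by
    by_contra! hcon
    have hgrow : ∀ t ≤ M + 1, dualFun A d vmin vmax qmin qmax (ziter 0) + t * δ ≤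
        dualFun A d vmin vmax qmin qmax (ziter t) := by
      intro t
      induction t with
      | zero => simp
      | succ t ih =>
        intro ht
        have := dualFun_ascent hA hLi hε hα0 (by nlinarith) (by linarith) hβ0 hβr hr2 (hnn t)
          (hstep t) (hcon t (by omega))
        have := ih (by omega)
        push_cast
        linarith
    have h1 := (hgrow (M + 1) le_rfl).trans (hle _)
    have h2 := (div_le_iff₀ hδ0).1 (hM ▸ Nat.le_ceil
      ((sSup S - dualFun A d vmin vmax qmin qmax (ziter 0)) / δ))
    push_cast at h1
    linarith
  exact ⟨T, hT, fes_le_Vfun A hv hq (hnn T), hTV⟩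

end
end

section
/- Let ρ > 0 and suppose the restricted problem with bounds [q^min + ρ·1, q^max − ρ·1] and [v^min + ρ·1, v^max − ρ·1] is feasible. Run the VC-LB iteration for the restricted problem (i.e., with q^min, q^max, v^min, v^max replaced by q^min + ρ·1, q^max − ρ·1, v^min + ρ·1, v^max − ρ·1 in the definition of ∇D) with step sizes α = 1/L and β = ρ/(4 N^{3/2} L). Then there exists T ∈ ℕ with T ≤ ⌈ 16 N³ L Q λ_max(A) / ρ² ⌉, where Q = max{ (q^min_i)², (q^max_i)² : i = 1,…,N } and λ_max(A) is the largest eigenvalue of A, such that q(z(T)) is an exact solution of the original voltage regulation problem: q^min ≤ q(z(T)) ≤ q^max and v^min ≤ v(q(z(T))) ≤ v^max, i.e., fes(q(z(T))) = 0. -/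
open Matrix

noncomputable section

section Spectral

variable {N : ℕ} {A : Matrix (Fin N) (Fin N) ℝ}

/-- Coordinates in an orthonormal eigenbasis diagonalize the three quadratic forms
`‖w‖²`, `wᵀAw` and `‖Aw‖²` simultaneously. -/
lemma exists_eigenbasis_coordinates (hA : A.IsHermitian) (w : Fin N → ℝ) :
    ∃ c : Fin N → ℝ, w ⬝ᵥ w = ∑ i, c i ^ 2 ∧
      w ⬝ᵥ A *ᵥ w = ∑ i, hA.eigenvalues i * c i ^ 2 ∧
      (A *ᵥ w) ⬝ᵥ (A *ᵥ w) = ∑ i, hA.eigenvalues i ^ 2 * c i ^ 2 := by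
  set U : Matrix (Fin N) (Fin N) ℝ := (hA.eigenvectorUnitary : Matrix (Fin N) (Fin N) ℝ) with hU
  have hUU : Uᵀ * U = 1 := by
    simpa [star_eq_conjTranspose] using Unitary.coe_star_mul_self hA.eigenvectorUnitary
  have hUU' : U * Uᵀ = 1 := mul_eq_one_comm.mp hUU
  have hspec : A = U * diagonal hA.eigenvalues * Uᵀ := by
    have h := hA.spectral_theorem
    rw [Unitary.conjStarAlgAut_apply] at h
    simpa [star_eq_conjTranspose, Function.comp_def] using h
  have hdot : ∀ x y : Fin N → ℝ, (U *ᵥ x) ⬝ᵥ (U *ᵥ y) = x ⬝ᵥ y := by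
    intro x y
    rw [dotProduct_mulVec, vecMul_mulVec, hUU, vecMul_one]
  have hw : w = U *ᵥ (Uᵀ *ᵥ w) := by rw [mulVec_mulVec, hUU', one_mulVec]
  have hAw : A *ᵥ w = U *ᵥ (diagonal hA.eigenvalues *ᵥ (Uᵀ *ᵥ w)) := by
    conv_lhs => rw [hspec]
    simp only [mulVec_mulVec, Matrix.mul_assoc]
  refine ⟨Uᵀ *ᵥ w, ?_, ?_, ?_⟩
  · conv_lhs => rw [hw, hdot]
    simp [dotProduct, sq]
  · rw [hAw]
    conv_lhs => enter [1]; rw [hw]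
    rw [hdot]
    simp only [dotProduct, mulVec_diagonal]
    exact Finset.sum_congr rfl fun i _ => by ring
  · rw [hAw, hdot]
    simp only [dotProduct, mulVec_diagonal]
    exact Finset.sum_congr rfl fun i _ => by ring

lemma dotProduct_mulVec_le_of_eigenvalues_le (hA : A.IsHermitian) {m : ℝ}
    (hm : ∀ i, hA.eigenvalues i ≤ m) (w : Fin N → ℝ) :
    w ⬝ᵥ A *ᵥ w ≤ m * (w ⬝ᵥ w) := by
  obtain ⟨c, h1, h2, -⟩ := exists_eigenbasis_coordinates hA w
  rw [h1, h2, Finset.mul_sum]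
  exact Finset.sum_le_sum fun i _ => mul_le_mul_of_nonneg_right (hm i) (sq_nonneg _)

lemma two_mul_norm_sq_add_le (hA : A.PosDef) {L : ℝ}
    (hL : ∀ i, 2 * (hA.1.eigenvalues i + (hA.1.eigenvalues i)⁻¹) ≤ L) (w : Fin N → ℝ) :
    2 * ((A *ᵥ w) ⬝ᵥ (A *ᵥ w) + w ⬝ᵥ w) ≤ L * (w ⬝ᵥ A *ᵥ w) := by
  obtain ⟨c, h1, h2, h3⟩ := exists_eigenbasis_coordinates hA.1 w
  rw [h1, h2, h3, ← Finset.sum_add_distrib, Finset.mul_sum, Finset.mul_sum]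
  refine Finset.sum_le_sum fun i _ => ?_
  have hpos := hA.eigenvalues_pos i
  have h := mul_le_mul_of_nonneg_right (hL i) (mul_nonneg hpos.le (sq_nonneg (c i)))
  have hcancel : (hA.1.eigenvalues i)⁻¹ * hA.1.eigenvalues i = 1 := inv_mul_cancel₀ hpos.ne'
  calc 2 * (hA.1.eigenvalues i ^ 2 * c i ^ 2 + c i ^ 2)
      = 2 * (hA.1.eigenvalues i + (hA.1.eigenvalues i)⁻¹)
          * (hA.1.eigenvalues i * c i ^ 2) := by
        linear_combination (-2 * c i ^ 2) * hcancel
    _ ≤ L * (hA.1.eigenvalues i * c i ^ 2) := h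

end Spectral

section Dual

variable {N : ℕ} {A : Matrix (Fin N) (Fin N) ℝ}

/-- The inner product of ℝ^{4N}, in block form. -/
def dot4 (z w : Fin 4 → Fin N → ℝ) : ℝ := ∑ b, ∑ i, z b i * w b i

lemma dot4_eq (z w : Fin 4 → Fin N → ℝ) :
    dot4 z w = z 0 ⬝ᵥ w 0 + z 1 ⬝ᵥ w 1 + z 2 ⬝ᵥ w 2 + z 3 ⬝ᵥ w 3 := by
  simp [dot4, dotProduct, Fin.sum_univ_four]

lemma dot4_sq_le (z w : Fin 4 → Fin N → ℝ) : dot4 z w ^ 2 ≤ dot4 z z * dot4 w w := by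
  have h := Finset.sum_mul_sq_le_sq_mul_sq Finset.univ
    (fun p : Fin 4 × Fin N => z p.1 p.2) (fun p => w p.1 p.2)
  simpa only [dot4, Fintype.sum_prod_type, sq] using h

/-- The constraint residuals at a primal point `q`, so that `gradD` at `z` is the
residual at `qOf A z`. -/
def constraintResidual (A : Matrix (Fin N) (Fin N) ℝ) (d vl vu ql qu q : Fin N → ℝ) :
    Fin 4 → Fin N → ℝ :=
  ![vl - volt A d q, volt A d q - vu, ql - q, q - qu]

/-- The transposed constraint map `(A q, -A q, q, -q)`. -/
def constraintMap (A : Matrix (Fin N) (Fin N) ℝ) (q : Fin N → ℝ) : Fin 4 → Fin N → ℝ :=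
  ![A *ᵥ q, -(A *ᵥ q), q, -q]

/-- The dual function in closed form. -/
def dualQuad (A : Matrix (Fin N) (Fin N) ℝ) (d vl vu ql qu : Fin N → ℝ)
    (z : Fin 4 → Fin N → ℝ) : ℝ :=
  dot4 z (constraintResidual A d vl vu ql qu 0) - (1 / 2) * (qOf A z ⬝ᵥ A *ᵥ qOf A z)

lemma dotProduct_mulVec_comm (hA : A.PosDef) (x y : Fin N → ℝ) :
    x ⬝ᵥ A *ᵥ y = y ⬝ᵥ A *ᵥ x := by
  have hT : Aᵀ = A := by simpa using hA.1.eq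
  rw [dotProduct_mulVec, ← mulVec_transpose, hT, dotProduct_comm]

lemma dot4_constraintMap (hA : A.PosDef) (z : Fin 4 → Fin N → ℝ) (q : Fin N → ℝ) :
    dot4 z (constraintMap A q) = qOf A z ⬝ᵥ A *ᵥ q := by
  have hdet : IsUnit A.det := (isUnit_iff_isUnit_det A).mp hA.isUnit
  have h : (A⁻¹ *ᵥ (z 2 - z 3)) ⬝ᵥ A *ᵥ q = (z 2 - z 3) ⬝ᵥ q := by
    rw [dotProduct_mulVec_comm hA, mulVec_mulVec, mul_nonsing_inv A hdet, one_mulVec,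
      dotProduct_comm]
  rw [qOf, add_dotProduct, h, sub_dotProduct, sub_dotProduct, dot4_eq]
  simp [constraintMap]
  ring

lemma dot4_constraintResidual (hA : A.PosDef) (d vl vu ql qu q : Fin N → ℝ) (z : Fin 4 → Fin N → ℝ) :
    dot4 z (constraintResidual A d vl vu ql qu q) =
      dot4 z (constraintResidual A d vl vu ql qu 0) - qOf A z ⬝ᵥ A *ᵥ q := by
  rw [← dot4_constraintMap hA]
  simp [dot4_eq, constraintResidual, constraintMap, volt, dotProduct_sub, dotProduct_add]
  ring

lemma qOf_add (z w : Fin 4 → Fin N → ℝ) : qOf A (z + w) = qOf A z + qOf A w := by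
  simp only [qOf, Pi.add_apply, add_sub_add_comm, mulVec_add]
  abel

lemma dualQuad_add (hA : A.PosDef) (d vl vu ql qu : Fin N → ℝ) (z w : Fin 4 → Fin N → ℝ) :
    dualQuad A d vl vu ql qu (z + w) = dualQuad A d vl vu ql qu z
      + dot4 w (gradD A d vl vu ql qu z) - (1 / 2) * (qOf A w ⬝ᵥ A *ᵥ qOf A w) := by
  have hG : gradD A d vl vu ql qu z = constraintResidual A d vl vu ql qu (qOf A z) := rfl
  rw [hG, dot4_constraintResidual hA]
  simp only [dualQuad, qOf_add, mulVec_add, dotProduct_add, add_dotProduct]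
  rw [dotProduct_mulVec_comm hA (qOf A z) (qOf A w)]
  simp only [dot4_eq, Pi.add_apply, add_dotProduct]
  ring

/-- Weak duality. -/
lemma dualQuad_le (hA : A.PosDef) {d vl vu ql qu q : Fin N → ℝ} {z : Fin 4 → Fin N → ℝ}
    (hz : ∀ b i, 0 ≤ z b i) (hq : ∀ b i, constraintResidual A d vl vu ql qu q b i ≤ 0) :
    dualQuad A d vl vu ql qu z ≤ (1 / 2) * (q ⬝ᵥ A *ᵥ q) := by
  have hle : dot4 z (constraintResidual A d vl vu ql qu q) ≤ 0 :=
    Finset.sum_nonpos fun b _ => Finset.sum_nonpos fun i _ =>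
      mul_nonpos_of_nonneg_of_nonpos (hz b i) (hq b i)
  have hsq : 0 ≤ (qOf A z - q) ⬝ᵥ A *ᵥ (qOf A z - q) := by
    simpa using hA.posSemidef.dotProduct_mulVec_nonneg (qOf A z - q)
  rw [dot4_constraintResidual hA] at hle
  rw [mulVec_sub, dotProduct_sub, sub_dotProduct, sub_dotProduct,
    dotProduct_mulVec_comm hA q (qOf A z)] at hsq
  rw [dualQuad]
  linarith

/-- The dual gradient is `L`-Lipschitz, expressed through the curvature of the dual. -/
lemma curvature_le (hA : A.PosDef) {L : ℝ}
    (hL : ∀ i, 2 * (hA.1.eigenvalues i + (hA.1.eigenvalues i)⁻¹) ≤ L)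
    (w : Fin 4 → Fin N → ℝ) :
    qOf A w ⬝ᵥ A *ᵥ qOf A w ≤ L * dot4 w w := by
  set X := qOf A w ⬝ᵥ A *ᵥ qOf A w with hX
  have hww : 0 ≤ dot4 w w :=
    Finset.sum_nonneg fun b _ => Finset.sum_nonneg fun i _ => mul_self_nonneg _
  have hXnonneg : 0 ≤ X := by
    simpa using hA.posSemidef.dotProduct_mulVec_nonneg (qOf A w)
  have hC : dot4 (constraintMap A (qOf A w)) (constraintMap A (qOf A w)) ≤ L * X := by
    refine le_trans (le_of_eq ?_) (two_mul_norm_sq_add_le hA hL (qOf A w))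
    simp [dot4_eq, constraintMap]
    ring
  have hCS := dot4_sq_le w (constraintMap A (qOf A w))
  rw [dot4_constraintMap hA, ← hX] at hCS
  rcases hXnonneg.eq_or_lt with h0 | hpos
  · rw [← h0] at hC ⊢
    by_cases hLn : 0 ≤ L
    · exact mul_nonneg hLn hww
    · have hw0 : ∀ i : Fin N, False := fun i => hLn <| le_trans
        (by have := hA.eigenvalues_pos i; positivity) (hL i)
      have : dot4 w w = 0 :=
        Finset.sum_eq_zero fun b _ => Finset.sum_eq_zero fun i _ => (hw0 i).elim
      simp [this]
  · have := hCS.trans (mul_le_mul_of_nonneg_left hC hww)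
    nlinarith

end Dual

section Steps

lemma projected_gradient_step {L z g : ℝ} (hL : 0 < L) (hz : 0 ≤ z) :
    0 ≤ (max (z + 1 / L * g) 0 - z) * g - L / 2 * (max (z + 1 / L * g) 0 - z) ^ 2 := by
  set h := 1 / L * g with hh
  have hg : g = L * h := by rw [hh]; field_simp
  rw [hg]
  rcases le_total 0 (z + h) with h1 | h1
  · rw [max_eq_left h1]
    nlinarith [mul_nonneg hL.le (sq_nonneg h)]
  · rw [max_eq_right h1]
    nlinarith [mul_nonneg hL.le (mul_nonneg hz (neg_nonneg.2 h1)),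
      mul_nonneg hL.le (sq_nonneg z)]

lemma projected_gradient_step_of_le {L z g ρ : ℝ} (hL : 0 < L) (hz : 0 ≤ z) (hρ : 0 < ρ)
    (hg : ρ ≤ g) :
    ρ ^ 2 / (2 * L) ≤
      (max (z + 1 / L * g) 0 - z) * g - L / 2 * (max (z + 1 / L * g) 0 - z) ^ 2 := by
  have hg0 : 0 ≤ g := hρ.le.trans hg
  rw [max_eq_left (by positivity)]
  have : (z + 1 / L * g - z) * g - L / 2 * (z + 1 / L * g - z) ^ 2 = g ^ 2 / (2 * L) := by
    field_simp
    ring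
  rw [this]
  gcongr

lemma sign_step {L z g β : ℝ} (hL : 0 < L) (hz : 0 ≤ z) (hβ : 0 ≤ β) :
    -(L / 2 * β ^ 2) ≤
      (max (z + β * sgn g) 0 - z) * g - L / 2 * (max (z + β * sgn g) 0 - z) ^ 2 := by
  suffices h : 0 ≤ (max (z + β * sgn g) 0 - z) * g ∧ (max (z + β * sgn g) 0 - z) ^ 2 ≤ β ^ 2 by
    nlinarith [mul_le_mul_of_nonneg_left h.2 hL.le, h.1]
  unfold sgn
  split_ifs with hg
  · rw [max_eq_left (by linarith)]
    exact ⟨by nlinarith [mul_nonneg hβ hg], by nlinarith⟩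
  · have h1 : max (z + β * -1) 0 - z ≤ 0 := sub_nonpos.2 (max_le (by linarith) hz)
    have h2 : -β ≤ max (z + β * -1) 0 - z := by linarith [le_max_left (z + β * -1) 0]
    exact ⟨mul_nonneg_of_nonpos_of_nonpos h1 (not_le.1 hg).le,
      sq_le_sq' h2 (h1.trans hβ)⟩

lemma sign_step_of_le {L z g β ρ : ℝ} (hz : 0 ≤ z) (hβ : 0 ≤ β) (hρ : 0 < ρ) (hg : ρ ≤ g) :
    -(L / 2 * β ^ 2) + ρ * β ≤
      (max (z + β * sgn g) 0 - z) * g - L / 2 * (max (z + β * sgn g) 0 - z) ^ 2 := by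
  rw [sgn, if_pos (hρ.le.trans hg), max_eq_left (by linarith)]
  nlinarith [mul_le_mul_of_nonneg_right hg hβ]

end Steps

lemma stepsize_bounds {N : ℕ} (hN : 0 < N) {L ρ β : ℝ} (hL : 0 < L) (hρ : 0 < ρ)
    (hβ : β = ρ / (4 * (N : ℝ) ^ ((3 : ℝ) / 2) * L)) :
    0 < β ∧ N * L * β ^ 2 + ρ ^ 2 / (32 * N ^ 2 * L) ≤ ρ ^ 2 / (2 * L) ∧
      N * L * β ^ 2 + ρ ^ 2 / (32 * N ^ 2 * L) ≤ ρ * β := by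
  have hN1 : (1 : ℝ) ≤ N := by exact_mod_cast hN
  have hN0 : (0 : ℝ) < N := by linarith
  set n := (N : ℝ) ^ ((3 : ℝ) / 2) with hn
  have hn0 : 0 < n := by positivity
  have hn2 : n ^ 2 = (N : ℝ) ^ 3 := by
    rw [hn, ← Real.rpow_natCast, ← Real.rpow_mul hN0.le, ← Real.rpow_natCast]
    norm_num
  have hnle : n ≤ (N : ℝ) ^ 2 := by
    rw [hn, ← Real.rpow_natCast]
    exact Real.rpow_le_rpow_of_exponent_le hN1 (by norm_num)
  have hloss : N * L * β ^ 2 + ρ ^ 2 / (32 * N ^ 2 * L) = 3 / 32 * (ρ ^ 2 / (N ^ 2 * L)) := by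
    rw [hβ, div_pow, mul_pow, mul_pow, hn2]
    field_simp
    norm_num
  have hX : 0 ≤ ρ ^ 2 / (N ^ 2 * L) := by positivity
  rw [hloss]
  refine ⟨by rw [hβ]; positivity, ?_, ?_⟩
  · have h : ρ ^ 2 / (N ^ 2 * L) ≤ ρ ^ 2 / (1 * L) := by
      gcongr
      exact one_le_pow₀ hN1
    have h' : ρ ^ 2 / (2 * L) = 1 / 2 * (ρ ^ 2 / (1 * L)) := by field_simp
    rw [h']
    linarith
  · have h : ρ ^ 2 / (N ^ 2 * L) ≤ ρ ^ 2 / (n * L) := by gcongr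
    have h' : ρ * β = 1 / 4 * (ρ ^ 2 / (n * L)) := by rw [hβ]; field_simp
    rw [h']
    linarith

lemma fes_eq_zero {N : ℕ} {A : Matrix (Fin N) (Fin N) ℝ} {d vmin vmax qmin qmax q : Fin N → ℝ}
    (hq : ∀ i, qmin i ≤ q i ∧ q i ≤ qmax i)
    (hv : ∀ i, vmin i ≤ volt A d q i ∧ volt A d q i ≤ vmax i) :
    fes A d vmin vmax qmin qmax q = 0 := by
  refine IsLeast.csInf_eq ⟨⟨q, volt A d q, hq, hv, by simp⟩, ?_⟩
  rintro r ⟨y1, y2, -, -, rfl⟩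
  exact Real.sqrt_nonneg _

/-- One step of the mixed gradient/sign iteration increases the dual function by a fixed
amount as long as some constraint is violated by at least `ρ`. -/
lemma dualQuad_step {N : ℕ} (hN : 0 < N) {A : Matrix (Fin N) (Fin N) ℝ} (hA : A.PosDef)
    {d vl vu ql qu : Fin N → ℝ} {L ρ β : ℝ} (hL0 : 0 < L) (hρ : 0 < ρ)
    (hL : ∀ i, 2 * (hA.1.eigenvalues i + (hA.1.eigenvalues i)⁻¹) ≤ L)
    (hβ : β = ρ / (4 * (N : ℝ) ^ ((3 : ℝ) / 2) * L))
    {z z' : Fin 4 → Fin N → ℝ} (hz : ∀ b i, 0 ≤ z b i)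
    (hstep : ∀ b i, z' b i = max (z b i + (if (b : ℕ) < 2 then
      1 / L * gradD A d vl vu ql qu z b i else β * sgn (gradD A d vl vu ql qu z b i))) 0)
    {b₀ : Fin 4} {i₀ : Fin N} (hviol : ρ ≤ gradD A d vl vu ql qu z b₀ i₀) :
    dualQuad A d vl vu ql qu z + ρ ^ 2 / (32 * N ^ 2 * L) ≤ dualQuad A d vl vu ql qu z' := by
  obtain ⟨hβ0, hgrad, hsign⟩ := stepsize_bounds hN hL0 hρ hβ
  set G := gradD A d vl vu ql qu z with hG
  set K := N * L * β ^ 2 + ρ ^ 2 / (32 * N ^ 2 * L) with hK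
  let loss : Fin 4 → ℝ := fun b => if (b : ℕ) < 2 then 0 else -(L / 2 * β ^ 2)
  let gain : Fin 4 → Fin N → ℝ := fun b i =>
    (z' b i - z b i) * G b i - L / 2 * (z' b i - z b i) ^ 2
  have hgain : ∀ b i, 0 ≤ gain b i - loss b := by
    intro b i
    simp only [gain, loss, hstep, sub_nonneg]
    split_ifs
    · exact projected_gradient_step hL0 (hz b i)
    · exact sign_step hL0 (hz b i) hβ0.le
  have hgain₀ : K ≤ gain b₀ i₀ - loss b₀ := by
    simp only [gain, loss, hstep]
    split_ifs
    · linarith [projected_gradient_step_of_le hL0 (hz b₀ i₀) hρ hviol]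
    · linarith [sign_step_of_le (L := L) (hz b₀ i₀) hβ0.le hρ hviol]
  have hsum : K ≤ ∑ b, ∑ i, (gain b i - loss b) :=
    hgain₀.trans <| (Finset.single_le_sum (f := fun i => gain b₀ i - loss b₀)
      (fun i _ => hgain b₀ i) (Finset.mem_univ i₀)).trans <|
      Finset.single_le_sum (f := fun b => ∑ i, (gain b i - loss b))
        (fun b _ => Finset.sum_nonneg fun i _ => hgain b i) (Finset.mem_univ b₀)
  have hloss : ∑ b, ∑ _i : Fin N, loss b = -(N * L * β ^ 2) := by
    simp [loss, Fin.sum_univ_four]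
    ring
  have htotal : ∑ b, ∑ i, gain b i = dot4 (z' - z) G - L / 2 * dot4 (z' - z) (z' - z) := by
    simp only [gain, dot4, Finset.sum_sub_distrib, Finset.mul_sum, Pi.sub_apply, sq]
  simp only [Finset.sum_sub_distrib] at hsum htotal
  rw [hloss] at hsum
  have hexp := dualQuad_add hA d vl vu ql qu z (z' - z)
  rw [add_sub_cancel, ← hG] at hexp
  have hcurv := curvature_le hA hL (z' - z)
  rw [hexp]
  linarith

/-- Corollary (exact solution): let ρ > 0 and suppose the restricted problem with bounds
[q^min + ρ1, q^max − ρ1], [v^min + ρ1, v^max − ρ1] is feasible.  Running VC-LB for the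
restricted problem with α = 1/L and β = ρ/(4N^{3/2}L), there is
T ≤ ⌈16N³LQλ_max(A)/ρ²⌉ such that q(z(T)) is an exact solution of the original voltage
regulation problem, i.e. fes(q(z(T))) = 0. -/
theorem stmt_12 (N : ℕ) (hN : 0 < N) (A : Matrix (Fin N) (Fin N) ℝ) (hA : A.PosDef)
    (d vmin vmax qmin qmax : Fin N → ℝ)
    (hv : ∀ i, vmin i ≤ vmax i) (hq : ∀ i, qmin i ≤ qmax i)
    (ρ : ℝ) (hρ : 0 < ρ)
    (hfeas : ∃ q : Fin N → ℝ,
      (∀ i, qmin i + ρ ≤ q i ∧ q i ≤ qmax i - ρ) ∧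
      ∀ i, vmin i + ρ ≤ volt A d q i ∧ volt A d q i ≤ vmax i - ρ)
    (L : ℝ)
    (hL : IsGreatest
      (Set.range fun i : Fin N => 2 * (hA.1.eigenvalues i + (hA.1.eigenvalues i)⁻¹)) L)
    (Q : ℝ)
    (hQ : IsGreatest
      ((Set.range fun i : Fin N => qmin i ^ 2) ∪ Set.range fun i : Fin N => qmax i ^ 2) Q)
    (lmax : ℝ) (hlmax : IsGreatest (Set.range hA.1.eigenvalues) lmax)
    (α β : ℝ) (hα : α = 1 / L) (hβ : β = ρ / (4 * (N : ℝ) ^ ((3 : ℝ) / 2) * L))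
    (ziter : ℕ → Fin 4 → Fin N → ℝ) (hz0 : ziter 0 = 0)
    (hstep : ∀ t b i, ziter (t + 1) b i =
      max (ziter t b i
        + (if (b : ℕ) < 2 then
            α * gradD A d (fun i => vmin i + ρ) (fun i => vmax i - ρ)
              (fun i => qmin i + ρ) (fun i => qmax i - ρ) (ziter t) b i
          else
            β * sgn (gradD A d (fun i => vmin i + ρ) (fun i => vmax i - ρ)
              (fun i => qmin i + ρ) (fun i => qmax i - ρ) (ziter t) b i))) 0) :
    ∃ T : ℕ,
      T ≤ ⌈16 * (N : ℝ) ^ 3 * L * Q * lmax / ρ ^ 2⌉₊ ∧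
      (∀ i, qmin i ≤ qOf A (ziter T) i ∧ qOf A (ziter T) i ≤ qmax i) ∧
      (∀ i, vmin i ≤ volt A d (qOf A (ziter T)) i ∧ volt A d (qOf A (ziter T)) i ≤ vmax i) ∧
      fes A d vmin vmax qmin qmax (qOf A (ziter T)) = 0 := by
  have hL' : ∀ i, 2 * (hA.1.eigenvalues i + (hA.1.eigenvalues i)⁻¹) ≤ L :=
    fun i => hL.2 ⟨i, rfl⟩
  have hL0 : 0 < L := by
    have := hA.eigenvalues_pos ⟨0, hN⟩
    exact lt_of_lt_of_le (by positivity) (hL' ⟨0, hN⟩)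
  have hlmax0 : 0 ≤ lmax := (hA.eigenvalues_pos ⟨0, hN⟩).le.trans (hlmax.2 ⟨_, rfl⟩)
  have hN0 : (0 : ℝ) < N := by exact_mod_cast hN
  subst hα
  set T₀ := ⌈16 * (N : ℝ) ^ 3 * L * Q * lmax / ρ ^ 2⌉₊ with hT₀
  by_cases hsol : ∃ T ≤ T₀, (∀ i, qmin i ≤ qOf A (ziter T) i ∧ qOf A (ziter T) i ≤ qmax i) ∧
      ∀ i, vmin i ≤ volt A d (qOf A (ziter T)) i ∧ volt A d (qOf A (ziter T)) i ≤ vmax i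
  · obtain ⟨T, hT, h1, h2⟩ := hsol
    exact ⟨T, hT, h1, h2, fes_eq_zero h1 h2⟩
  exfalso
  set D := dualQuad A d (fun i => vmin i + ρ) (fun i => vmax i - ρ)
    (fun i => qmin i + ρ) (fun i => qmax i - ρ) with hD
  have hviol : ∀ t ≤ T₀, ∃ b i, ρ ≤ gradD A d (fun i => vmin i + ρ) (fun i => vmax i - ρ)
      (fun i => qmin i + ρ) (fun i => qmax i - ρ) (ziter t) b i := by
    intro t ht
    by_contra! hcon
    refine hsol ⟨t, ht, fun i => ?_, fun i => ?_⟩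
    · have h2 := hcon 2 i
      have h3 := hcon 3 i
      simp [gradD] at h2 h3
      constructor <;> linarith
    · have h0 := hcon 0 i
      have h1 := hcon 1 i
      simp [gradD] at h0 h1
      constructor <;> linarith
  have hnonneg : ∀ t b i, 0 ≤ ziter t b i := by
    rintro (_ | t) b i
    · simp [hz0]
    · rw [hstep]
      exact le_max_right _ _
  have hgrow : ∀ t ≤ T₀ + 1, t * (ρ ^ 2 / (32 * N ^ 2 * L)) ≤ D (ziter t) := by
    intro t
    induction t with
    | zero => simp [hz0, hD, dualQuad, dot4, qOf]
    | succ t ih =>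
      intro ht
      obtain ⟨b, i, hbi⟩ := hviol t (by omega)
      have hs := dualQuad_step hN hA hL0 hρ hL' hβ (hnonneg t) (hstep t) hbi
      have := ih (by omega)
      push_cast
      linarith
  obtain ⟨q, hq1, hq2⟩ := hfeas
  have hdual : D (ziter (T₀ + 1)) ≤ (1 / 2) * (q ⬝ᵥ A *ᵥ q) := by
    refine dualQuad_le hA (hnonneg _) fun b i => ?_
    have h1 := hq1 i
    have h2 := hq2 i
    fin_cases b <;> simp [constraintResidual] <;> linarith
  have hqq : q ⬝ᵥ q ≤ N * Q := by
    have : ∀ i ∈ Finset.univ, q i * q i ≤ Q := by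
      intro i _
      have hmin : qmin i ^ 2 ≤ Q := hQ.2 (Or.inl ⟨i, rfl⟩)
      have hmax : qmax i ^ 2 ≤ Q := hQ.2 (Or.inr ⟨i, rfl⟩)
      obtain ⟨h1, h2⟩ := hq1 i
      rcases le_total 0 (q i) with h | h <;> nlinarith
    simpa [dotProduct] using Finset.sum_le_card_nsmul _ _ _ this
  have hqA : q ⬝ᵥ A *ᵥ q ≤ lmax * (N * Q) :=
    (dotProduct_mulVec_le_of_eigenvalues_le hA.1 (fun i => hlmax.2 ⟨i, rfl⟩) q).trans
      (mul_le_mul_of_nonneg_left hqq hlmax0)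
  have hceil := mul_le_mul_of_nonneg_right
    (Nat.le_ceil (16 * (N : ℝ) ^ 3 * L * Q * lmax / ρ ^ 2))
    (show 0 ≤ ρ ^ 2 / (32 * N ^ 2 * L) by positivity)
  have hval : 16 * (N : ℝ) ^ 3 * L * Q * lmax / ρ ^ 2 * (ρ ^ 2 / (32 * N ^ 2 * L)) =
      1 / 2 * (lmax * (N * Q)) := by
    field_simp
    ring
  have hδ : 0 < ρ ^ 2 / (32 * N ^ 2 * L) := by positivity
  have hfinal := hgrow (T₀ + 1) le_rfl
  rw [hval, ← hT₀] at hceil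
  push_cast at hfinal
  linarith

end
end
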